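/- For every α∈(0,1] and θ > 0, the integral ∫_0^∞ (ln t + (ln θ)/α + γ)²·θ t^{α−1} E_{α,α}(−θ t^α) dt converges and equals π²·(1/(3α²) − 1/6), where γ is the Euler–Mascheroni constant. (This is the variance of the logarithm of a Mittag-Leffler ML(α,θ) waiting time.) -/

import Mathlib

open MeasureTheory Real

/-- Two-parameter Mittag-Leffler function `E_{β,γ}(w) = ∑ w^r / Γ(βr+γ)`. -/
noncomputable def mittagLeffler (β γ w : ℝ) : ℝ :=
  ∑' r : ℕ, w ^ r / Real.Gamma (β * r + γ)

/-
Let `X` have the law `ML(α, 1)` and let `U` be an independent standard exponential variable.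
If `E[e^(-sX)] = 1 / (1 + s^α)` for all `s > 0`, then `P(U / X > s) = E[e^(-sX)] = 1 / (1 + s^α)`,
so `log U - log X` is logistic with mean `0` and second moment `π² / (3 α²)`. As `log U` has mean
`-γ`, Tonelli's theorem splits that second moment into `E[(log X + γ)²] + Var(log U)`; for `α = 1`,
where `X` is itself exponential, this says `Var(log U) = π² / 6`. A general `θ` only rescales `X`.

It remains to see that `t^(α-1) E_{α,α}(-t^α)` is nonnegative with Laplace transform
`1 / (1 + s^α)`. Integrating the power series termwise gives the transform for `s > 1` only, and no
sign. But for `α < 1` the function `1 / (1 + s^α)` has a Stieltjes representation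
`∫ k(y) e^y / (e^y + s) dy` with an explicit `k ≥ 0`: in the variable `w = log s` it is Cauchy's
formula on the strip `|Im w| ≤ π`, where `k` is the jump between the two edges. This is the Laplace
transform of a mixture of exponential densities, which by uniqueness of Laplace transforms equals
the Mittag-Leffler density almost everywhere.
-/

open Set Filter Topology ProbabilityTheory

open scoped Interval

theorem mittagLeffler_one_one (w : ℝ) : mittagLeffler 1 1 w = exp w := by
  simp only [mittagLeffler, one_mul, Real.Gamma_nat_eq_factorial, exp_eq_exp_ℝ,
    NormedSpace.exp_eq_tsum_div]

section MittagLefflerLaplace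

variable {β γ s r : ℝ}

theorem integral_pow_div_Gamma_mul_rpow_mul_exp_neg_mul (hs : 0 < s) (c : ℝ) {n : ℕ}
    (hn : 0 < β * n + γ) :
    ∫ t in Ioi 0, c ^ n / Gamma (β * n + γ) * (t ^ (β * n + γ - 1) * exp (-(s * t))) =
      (c / s ^ β) ^ n * s ^ (-γ) := by
  have hΓ := (Gamma_pos_of_pos hn).ne'
  rw [integral_const_mul, integral_rpow_mul_exp_neg_mul_Ioi hn hs, one_div, inv_rpow hs.le,
    ← rpow_neg hs.le, neg_add, rpow_add hs, rpow_neg hs.le, rpow_mul_natCast hs.le, div_pow]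
  field_simp

theorem integral_exp_neg_mul_mul_mittagLeffler (hβ : 0 < β) (hγ : 0 < γ) (hs : 0 < s)
    (hr : |r| < s ^ β) :
    ∫ t in Ioi 0, exp (-(s * t)) * (t ^ (γ - 1) * mittagLeffler β γ (r * t ^ β)) =
      s ^ (β - γ) / (s ^ β - r) := by
  let F (n : ℕ) (t : ℝ) : ℝ :=
    r ^ n / Gamma (β * n + γ) * (t ^ (β * n + γ - 1) * exp (-(s * t)))
  have hpos (n : ℕ) : 0 < β * n + γ := by positivity
  have hF_integrable (n : ℕ) : Integrable (F n) (volume.restrict (Ioi 0)) := by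
    refine Integrable.const_mul (Integrable.of_integral_ne_zero ?_) _
    rw [integral_rpow_mul_exp_neg_mul_Ioi (hpos n) hs]
    have := Gamma_pos_of_pos (hpos n)
    positivity
  have hF_norm (n : ℕ) : ∫ t in Ioi 0, ‖F n t‖ = (|r| / s ^ β) ^ n * s ^ (-γ) := by
    rw [← integral_pow_div_Gamma_mul_rpow_mul_exp_neg_mul hs _ (hpos n)]
    refine setIntegral_congr_fun measurableSet_Ioi fun t (ht : 0 < t) ↦ ?_
    simp only [F, norm_mul, norm_div, norm_pow, norm_eq_abs, abs_exp,
      abs_of_pos (Gamma_pos_of_pos (hpos n)), abs_of_pos (rpow_pos_of_pos ht _)]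
  have hF_tsum : EqOn (fun t ↦ exp (-(s * t)) * (t ^ (γ - 1) * mittagLeffler β γ (r * t ^ β)))
      (fun t ↦ ∑' n, F n t) (Ioi 0) := fun t (ht : 0 < t) ↦ by
    simp only [mittagLeffler, ← tsum_mul_left]
    refine tsum_congr fun n ↦ ?_
    simp only [F]
    rw [add_sub_assoc, rpow_add ht, rpow_mul_natCast ht.le, mul_pow]
    ring
  have hsβ : 0 < s ^ β := rpow_pos_of_pos hs β
  have hsum : Summable fun n ↦ ∫ t in Ioi 0, ‖F n t‖ := by
    simp only [hF_norm]
    exact (summable_geometric_of_lt_one (by positivity) ((div_lt_one hsβ).2 hr)).mul_right _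
  have hterm := hasSum_integral_of_summable_integral_norm hF_integrable hsum
  simp only [F, integral_pow_div_Gamma_mul_rpow_mul_exp_neg_mul hs _ (hpos _)] at hterm
  rw [setIntegral_congr_fun measurableSet_Ioi hF_tsum, ← hterm.tsum_eq, tsum_mul_right,
    tsum_geometric_of_abs_lt_one (by rwa [abs_div, abs_of_pos hsβ, div_lt_one hsβ]),
    sub_eq_add_neg β, rpow_add hs, one_sub_div hsβ.ne', inv_div, div_mul_eq_mul_div]

theorem integrableOn_exp_neg_mul_mul_mittagLeffler (hβ : 0 < β) (hγ : 0 < γ) (hs : 0 < s)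
    (hr : |r| < s ^ β) :
    IntegrableOn (fun t ↦ exp (-(s * t)) * (t ^ (γ - 1) * mittagLeffler β γ (r * t ^ β)))
      (Ioi 0) := by
  refine Integrable.of_integral_ne_zero ?_
  rw [integral_exp_neg_mul_mul_mittagLeffler hβ hγ hs hr]
  exact div_ne_zero (rpow_pos_of_pos hs _).ne' (sub_pos.2 ((le_abs_self r).trans_lt hr)).ne'

end MittagLefflerLaplace

section LaplaceUniqueness

theorem ext_of_mgf_id_eq_of_zero_mem_interior {μ ν : Measure ℝ} [IsFiniteMeasure μ]
    [IsFiniteMeasure ν] (hμ : 0 ∈ interior (integrableExpSet id μ))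
    (hν : 0 ∈ interior (integrableExpSet id ν)) (h : mgf id μ =ᶠ[𝓝 0] mgf id ν) : μ = ν := by
  set U := interior (integrableExpSet id μ) ∩ interior (integrableExpSet id ν)
  have hconvex : Convex ℝ U :=
    convex_integrableExpSet.interior.inter convex_integrableExpSet.interior
  have hreal : ∃ᶠ z : ℂ in 𝓝[≠] 0, complexMGF id μ z = complexMGF id ν z := by
    have hcoe : Tendsto Complex.ofReal (𝓝[≠] 0) (𝓝[≠] 0) :=
      (Complex.continuous_ofReal.tendsto' _ _ Complex.ofReal_zero).inf
        (tendsto_principal_principal.2 fun x hx ↦ Complex.ofReal_ne_zero.2 hx)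
    refine hcoe.frequently (Eventually.frequently ?_)
    filter_upwards [h.filter_mono nhdsWithin_le_nhds] with x hx
    rw [complexMGF_ofReal, complexMGF_ofReal, hx]
  have hstrip : EqOn (complexMGF id μ) (complexMGF id ν) {z | z.re ∈ U} :=
    AnalyticOnNhd.eqOn_of_preconnected_of_frequently_eq
      (analyticOnNhd_complexMGF.mono fun z hz ↦ hz.1)
      (analyticOnNhd_complexMGF.mono fun z hz ↦ hz.2)
      (hconvex.linear_preimage Complex.reLm).isPreconnected
      (z₀ := 0) ⟨hμ, hν⟩ hreal
  refine Measure.ext_of_charFun (funext fun t ↦ ?_)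
  rw [← complexMGF_id_mul_I, ← complexMGF_id_mul_I]
  exact hstrip (by simpa using ⟨hμ, hν⟩)

variable {m : Measure ℝ} {p : ℝ → ℝ}

theorem toReal_ofReal_smul_exp (u x t : ℝ) :
    (ENNReal.ofReal x).toReal • exp (u * t) = max (exp (u * t) * x) 0 := by
  rw [ENNReal.toReal_ofReal', smul_eq_mul, max_mul_of_nonneg _ _ (exp_pos _).le, zero_mul,
    mul_comm]

theorem integrable_exp_mul_withDensity_ofReal {u : ℝ} (hp : AEMeasurable p m)
    (hint : Integrable (fun t ↦ exp (u * t) * p t) m) :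
    Integrable (fun t ↦ exp (u * t)) (m.withDensity fun t ↦ ENNReal.ofReal (p t)) := by
  rw [integrable_withDensity_iff_integrable_smul₀' hp.ennreal_ofReal
    (ae_of_all _ fun _ ↦ ENNReal.ofReal_lt_top)]
  simpa only [toReal_ofReal_smul_exp] using hint.pos_part

theorem mgf_id_withDensity_ofReal {u : ℝ} (hp : AEMeasurable p m) :
    mgf id (m.withDensity fun t ↦ ENNReal.ofReal (p t)) u = ∫ t, max (exp (u * t) * p t) 0 ∂m := by
  simp only [mgf, id, integral_withDensity_eq_integral_toReal_smul₀ hp.ennreal_ofReal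
    (ae_of_all _ fun _ ↦ ENNReal.ofReal_lt_top), toReal_ofReal_smul_exp]

theorem mgf_id_withDensity_ofReal_sub {u : ℝ} (hp : AEMeasurable p m)
    (hint : Integrable (fun t ↦ exp (u * t) * p t) m) :
    mgf id (m.withDensity fun t ↦ ENNReal.ofReal (p t)) u -
      mgf id (m.withDensity fun t ↦ ENNReal.ofReal (-p t)) u = ∫ t, exp (u * t) * p t ∂m := by
  rw [mgf_id_withDensity_ofReal hp, mgf_id_withDensity_ofReal hp.fun_neg]
  simp only [mul_neg]
  rw [← integral_sub hint.pos_part hint.neg_part]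
  simp only [max_zero_sub_max_neg_zero_eq_self]

theorem ae_eq_zero_of_integral_exp_mul_eq_zero {ε : ℝ} (hε : 0 < ε)
    (hint : ∀ u ∈ Ioo (-ε) ε, Integrable (fun t ↦ exp (u * t) * p t) m)
    (hzero : ∀ u ∈ Ioo (-ε) ε, ∫ t, exp (u * t) * p t ∂m = 0) : p =ᵐ[m] 0 := by
  have hp : Integrable p m := by simpa using hint 0 ⟨neg_lt_zero.2 hε, hε⟩
  have hnhds : Ioo (-ε) ε ∈ 𝓝 (0 : ℝ) := Ioo_mem_nhds (neg_lt_zero.2 hε) hε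
  have hfinite := isFiniteMeasure_withDensity_ofReal hp.2
  have hfinite' := isFiniteMeasure_withDensity_ofReal hp.neg.2
  have hmeasures : (m.withDensity fun t ↦ ENNReal.ofReal (p t)) =
      m.withDensity fun t ↦ ENNReal.ofReal (-p t) := by
    refine ext_of_mgf_id_eq_of_zero_mem_interior (mem_interior_iff_mem_nhds.2 ?_)
      (mem_interior_iff_mem_nhds.2 ?_) ?_
    · filter_upwards [hnhds] with u hu
      exact integrable_exp_mul_withDensity_ofReal hp.aemeasurable (hint u hu)
    · filter_upwards [hnhds] with u hu
      exact integrable_exp_mul_withDensity_ofReal hp.neg.aemeasurable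
        (by simpa using (hint u hu).neg)
    · filter_upwards [hnhds] with u hu
      rw [← sub_eq_zero, mgf_id_withDensity_ofReal_sub hp.aemeasurable (hint u hu), hzero u hu]
  have hdensities := (withDensity_eq_iff hp.aemeasurable.ennreal_ofReal
    hp.neg.aemeasurable.ennreal_ofReal hp.lintegral_lt_top.ne).1 hmeasures
  filter_upwards [hdensities] with t ht
  have hparts := congrArg ENNReal.toReal ht
  rw [ENNReal.toReal_ofReal', ENNReal.toReal_ofReal', ← sub_eq_zero, Pi.neg_apply,
    max_zero_sub_max_neg_zero_eq_self] at hparts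
  exact hparts

theorem ae_eq_of_integral_exp_neg_mul_eq {f g : ℝ → ℝ} {a : ℝ}
    (hf : ∀ s > a, Integrable (fun t ↦ exp (-(s * t)) * f t) m)
    (hg : ∀ s > a, Integrable (fun t ↦ exp (-(s * t)) * g t) m)
    (h : ∀ s > a, ∫ t, exp (-(s * t)) * f t ∂m = ∫ t, exp (-(s * t)) * g t ∂m) :
    f =ᵐ[m] g := by
  have hshift (u t : ℝ) : exp (u * t) * (exp (-((a + 1) * t)) * (f t - g t)) =
      exp (-((a + 1 - u) * t)) * f t - exp (-((a + 1 - u) * t)) * g t := by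
    rw [← mul_assoc, ← exp_add, mul_sub]
    ring_nf
  have hweighted : (fun t ↦ exp (-((a + 1) * t)) * (f t - g t)) =ᵐ[m] 0 := by
    refine ae_eq_zero_of_integral_exp_mul_eq_zero one_pos (fun u hu ↦ ?_) fun u hu ↦ ?_
    all_goals
      have hs : a + 1 - u > a := by linarith [hu.2]
      simp only [hshift]
    · exact (hf _ hs).sub (hg _ hs)
    · rw [integral_sub (hf _ hs) (hg _ hs), h _ hs, sub_self]
  filter_upwards [hweighted] with t ht
  exact sub_eq_zero.1 ((mul_eq_zero.1 ht).resolve_left (exp_pos _).ne')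

end LaplaceUniqueness

section Strip

open Complex (I re im)

variable {F : ℂ → ℂ} {a b : ℝ} {L L' : ℂ}

theorem tendsto_integral_vertical {l : Filter ℝ} [l.IsCountablyGenerated]
    (hF : ContinuousOn F (im ⁻¹' [[a, b]]))
    (hL : Tendsto F (comap re l ⊓ 𝓟 (im ⁻¹' [[a, b]])) (𝓝 L)) :
    Tendsto (fun x : ℝ ↦ ∫ y in a..b, F (x + y * I)) l (𝓝 ((b - a) * L)) := by
  have hmaps {y : ℝ} (hy : y ∈ Ι a b) (x : ℝ) : (x + y * I : ℂ) ∈ im ⁻¹' [[a, b]] := by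
    simpa using uIoc_subset_uIcc hy
  have hbounded : ∀ᶠ x : ℝ in l, ∀ y ∈ Ι a b, ‖F (x + y * I)‖ ≤ ‖L‖ + 1 := by
    have hnear := hL.norm.eventually_le_const (lt_add_one ‖L‖)
    rw [eventually_inf_principal, eventually_comap] at hnear
    filter_upwards [hnear] with x hx y hy
    exact hx _ (by simp) (hmaps hy x)
  have hlim := intervalIntegral.tendsto_integral_filter_of_dominated_convergence (μ := volume)
    (F := fun (x y : ℝ) ↦ F (x + y * I)) (f := fun _ ↦ L) (a := a) (b := b) (fun _ ↦ ‖L‖ + 1)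
    (.of_forall fun x ↦ ?_) (hbounded.mono fun x hx ↦ ae_of_all _ hx) (by simp)
    (ae_of_all _ fun y hy ↦ hL.comp ?_)
  · simpa using hlim
  · exact (hF.comp (by fun_prop) fun y hy ↦ hmaps hy x).aestronglyMeasurable measurableSet_uIoc
  · exact tendsto_inf.2 ⟨tendsto_comap_iff.2 (tendsto_id.congr fun x ↦ by simp),
      tendsto_principal.2 (.of_forall (hmaps hy))⟩

theorem integral_horizontal_sub_eq (hF : DifferentiableOn ℂ F (im ⁻¹' [[a, b]])) (c d : ℝ) :
    ∫ x in c..d, (F (x + a * I) - F (x + b * I)) =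
      I * ((∫ y in a..b, F (c + y * I)) - ∫ y in a..b, F (d + y * I)) := by
  have hint {v : ℝ} (hv : v ∈ [[a, b]]) :
      IntervalIntegrable (fun x : ℝ ↦ F (x + v * I)) volume c d :=
    (hF.continuousOn.comp_continuous (by fun_prop) fun x ↦ by simpa using hv).intervalIntegrable _ _
  have hrect := Complex.integral_boundary_rect_eq_zero_of_differentiableOn F (c + a * I) (d + b * I)
    (hF.mono fun z hz ↦ by simpa using hz.2)
  simp only [Complex.add_re, Complex.add_im, Complex.ofReal_re, Complex.ofReal_im, Complex.mul_re,
    Complex.mul_im, Complex.I_re, Complex.I_im, mul_zero, mul_one, add_zero, zero_add, sub_zero,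
    smul_eq_mul] at hrect
  rw [intervalIntegral.integral_sub (hint left_mem_uIcc) (hint right_mem_uIcc)]
  linear_combination hrect

theorem tendsto_integral_horizontal_sub (hF : DifferentiableOn ℂ F (im ⁻¹' [[a, b]]))
    (hL : Tendsto F (comap re atBot ⊓ 𝓟 (im ⁻¹' [[a, b]])) (𝓝 L))
    (hL' : Tendsto F (comap re atTop ⊓ 𝓟 (im ⁻¹' [[a, b]])) (𝓝 L')) :
    Tendsto (fun R : ℝ ↦ ∫ x in -R..R, (F (x + a * I) - F (x + b * I))) atTop
      (𝓝 (I * ((b - a) * L - (b - a) * L'))) := by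
  simp only [integral_horizontal_sub_eq hF]
  exact (((tendsto_integral_vertical hF.continuousOn hL).comp tendsto_neg_atTop_atBot).sub
    (tendsto_integral_vertical hF.continuousOn hL')).const_mul I

theorem integrable_and_integral_eq_of_horizontal_sub {k : ℝ → ℝ} (hk : ∀ x, 0 ≤ k x)
    (hF : DifferentiableOn ℂ F (im ⁻¹' [[a, b]]))
    (hjump : ∀ x : ℝ, F (x + a * I) - F (x + b * I) = k x * I)
    (hL : Tendsto F (comap re atBot ⊓ 𝓟 (im ⁻¹' [[a, b]])) (𝓝 L))
    (hL' : Tendsto F (comap re atTop ⊓ 𝓟 (im ⁻¹' [[a, b]])) (𝓝 L')) :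
    Integrable k ∧ ((∫ x, k x : ℝ) : ℂ) = (b - a) * (L - L') := by
  have hedge {v : ℝ} (hv : v ∈ [[a, b]]) : Continuous fun x : ℝ ↦ F (x + v * I) :=
    hF.continuousOn.comp_continuous (by fun_prop) fun x ↦ by simpa using hv
  have hk_cont : Continuous k := by
    have hk_eq : k = fun x : ℝ ↦ (F (x + a * I) - F (x + b * I)).im := by
      ext x
      simp [hjump]
    rw [hk_eq]
    exact Complex.continuous_im.comp ((hedge left_mem_uIcc).sub (hedge right_mem_uIcc))
  have hlim := tendsto_integral_horizontal_sub hF hL hL'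
  simp only [hjump, intervalIntegral.integral_mul_const, intervalIntegral.integral_ofReal] at hlim
  have hk_int : Integrable k := by
    refine integrable_of_intervalIntegral_norm_tendsto _ (fun R ↦ hk_cont.integrableOn_Ioc)
      tendsto_neg_atTop_atBot tendsto_id
      (((Complex.continuous_im.tendsto _).comp hlim).congr fun R ↦ ?_)
    simp [abs_of_nonneg (hk _)]
  have hlim' := ((Complex.continuous_ofReal.tendsto _).comp (intervalIntegral_tendsto_integral
    hk_int tendsto_neg_atTop_atBot tendsto_id)).mul_const I
  refine ⟨hk_int, mul_right_cancel₀ Complex.I_ne_zero ?_⟩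
  rw [tendsto_nhds_unique hlim' hlim]
  ring

end Strip

section StieltjesInversion

open Complex (I re im)

theorem cexp_ne_cexp_ofReal {w : ℂ} {x : ℝ} (hw : w.im ∈ Icc (-π) π) (hwx : w ≠ x) :
    Complex.exp w ≠ Complex.exp x := by
  intro h
  obtain ⟨n, hn⟩ := Complex.exp_eq_exp_iff_exists_int.1 h
  have him : w.im = n * (2 * π) := by simpa using congrArg im hn
  have hn_zero : n = 0 := by
    have hlt : |(n : ℝ)| < 1 := by
      rw [abs_lt]
      constructor <;> nlinarith [hw.1, hw.2, pi_pos]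
    exact Int.abs_lt_one_iff.1 (by exact_mod_cast hlt)
  exact hwx (by simpa [hn_zero] using hn)

theorem dslope_cexp_ofReal_ne_zero {w : ℂ} {x : ℝ} (hw : w.im ∈ Icc (-π) π) :
    dslope Complex.exp x w ≠ 0 := by
  rcases eq_or_ne w x with rfl | hwx
  · simp [dslope_same]
  · rw [dslope_of_ne _ hwx, slope_def_field]
    exact div_ne_zero (sub_ne_zero.2 (cexp_ne_cexp_ofReal hw hwx)) (sub_ne_zero.2 hwx)

/-- The Cauchy kernel `(h w - h x) * e^w / (e^w - e^x)` in the logarithmic variable, with its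
removable singularity at `w = x` filled in. -/
noncomputable def logCauchyQuotient (h : ℂ → ℂ) (x : ℝ) (w : ℂ) : ℂ :=
  dslope h x w * (Complex.exp w / dslope Complex.exp x w)

variable {h : ℂ → ℂ} {k : ℝ → ℝ} {L L' : ℂ} (x : ℝ)

theorem logCauchyQuotient_of_ne {w : ℂ} (hwx : w ≠ x) :
    logCauchyQuotient h x w =
      (h w - h x) * (Complex.exp w / (Complex.exp w - Complex.exp x)) := by
  have hsub := sub_ne_zero.2 hwx
  rw [logCauchyQuotient, dslope_of_ne _ hwx, dslope_of_ne _ hwx, slope_def_field, slope_def_field]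
  field_simp

theorem differentiableOn_logCauchyQuotient (hh : DifferentiableOn ℂ h (im ⁻¹' [[-π, π]])) :
    DifferentiableOn ℂ (logCauchyQuotient h x) (im ⁻¹' [[-π, π]]) := by
  have hmem : im ⁻¹' [[-π, π]] ∈ 𝓝 (x : ℂ) := by
    refine Complex.continuous_im.continuousAt.preimage_mem_nhds ?_
    rw [uIcc_of_le (by linarith [pi_pos])]
    exact Icc_mem_nhds (by simpa using pi_pos) (by simpa using pi_pos)
  refine ((Complex.differentiableOn_dslope hmem).2 hh).mul
    (Complex.differentiable_exp.differentiableOn.div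
      ((Complex.differentiableOn_dslope hmem).2 Complex.differentiable_exp.differentiableOn)
      fun w hw ↦ dslope_cexp_ofReal_ne_zero ?_)
  rwa [← uIcc_of_le (by linarith [pi_pos])]

theorem tendsto_logCauchyQuotient_atBot
    (hL : Tendsto h (comap re atBot ⊓ 𝓟 (im ⁻¹' [[-π, π]])) (𝓝 L)) :
    Tendsto (logCauchyQuotient h x) (comap re atBot ⊓ 𝓟 (im ⁻¹' [[-π, π]])) (𝓝 0) := by
  have hexp : Tendsto Complex.exp (comap re atBot ⊓ 𝓟 (im ⁻¹' [[-π, π]])) (𝓝 0) :=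
    Complex.tendsto_exp_comap_re_atBot.mono_left inf_le_left
  have hne : ∀ᶠ w : ℂ in comap re atBot ⊓ 𝓟 (im ⁻¹' [[-π, π]]), w ≠ x := by
    filter_upwards [(tendsto_comap.mono_left inf_le_left).eventually (eventually_lt_atBot x)]
      with w hw hwx
    simp [hwx] at hw
  have hlim := (hL.sub_const (h x)).mul
    (hexp.div (hexp.sub_const (Complex.exp x)) (by simp [Complex.exp_ne_zero]))
  rw [zero_div, mul_zero] at hlim
  exact hlim.congr' (hne.mono fun w hw ↦ (logCauchyQuotient_of_ne x hw).symm)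

theorem tendsto_logCauchyQuotient_atTop
    (hL' : Tendsto h (comap re atTop ⊓ 𝓟 (im ⁻¹' [[-π, π]])) (𝓝 L')) :
    Tendsto (logCauchyQuotient h x) (comap re atTop ⊓ 𝓟 (im ⁻¹' [[-π, π]])) (𝓝 (L' - h x)) := by
  have hexp : Tendsto (fun w ↦ (Complex.exp w)⁻¹) (comap re atTop ⊓ 𝓟 (im ⁻¹' [[-π, π]])) (𝓝 0) :=
    (tendsto_inv₀_cobounded.comp Complex.tendsto_exp_comap_re_atTop).mono_left inf_le_left
  have hne : ∀ᶠ w : ℂ in comap re atTop ⊓ 𝓟 (im ⁻¹' [[-π, π]]), w ≠ x := by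
    filter_upwards [(tendsto_comap.mono_left inf_le_left).eventually (eventually_gt_atTop x)]
      with w hw hwx
    simp [hwx] at hw
  have hlim := (hL'.sub_const (h x)).mul
    (((hexp.const_mul (Complex.exp x)).const_sub 1).inv₀ (by simp))
  rw [mul_zero, sub_zero, inv_one, mul_one] at hlim
  refine hlim.congr' (hne.mono fun w hw ↦ ?_)
  rw [logCauchyQuotient_of_ne x hw, ← div_eq_mul_inv (Complex.exp (x : ℂ)),
    one_sub_div (Complex.exp_ne_zero w), inv_div]

theorem logCauchyQuotient_sub {y : ℝ}
    (hjump : h (y + ((-π : ℝ) : ℂ) * I) - h (y + π * I) = (2 * π * k y : ℝ) * I) :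
    logCauchyQuotient h x (y + ((-π : ℝ) : ℂ) * I) - logCauchyQuotient h x (y + π * I) =
      (2 * π * (k y * (exp y / (exp y + exp x))) : ℝ) * I := by
  have hexp (v : ℝ) (hv : Complex.exp (v * I) = -1) :
      logCauchyQuotient h x (y + v * I) =
        (h (y + v * I) - h x) * (exp y / (exp y + exp x) : ℝ) := by
    have hcexp : Complex.exp (y + v * I) = -Complex.exp y := by
      rw [Complex.exp_add, hv, mul_neg_one]
    have hne : (y + v * I : ℂ) ≠ x := fun hx ↦ by
      have := congrArg Complex.exp hx
      rw [hcexp] at this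
      have : -exp y = exp x := by exact_mod_cast this
      linarith [exp_pos x, exp_pos y]
    rw [logCauchyQuotient_of_ne x hne, hcexp, ← neg_add', neg_div_neg_eq]
    push_cast
    ring
  rw [hexp (-π) (by simp [Complex.exp_neg]), hexp π Complex.exp_pi_mul_I, ← sub_mul,
    sub_sub_sub_cancel_right, hjump]
  push_cast
  ring

theorem integral_mul_exp_div_eq (hk : ∀ y, 0 ≤ k y)
    (hh : DifferentiableOn ℂ h (im ⁻¹' [[-π, π]]))
    (hjump : ∀ y : ℝ, h (y + ((-π : ℝ) : ℂ) * I) - h (y + π * I) = (2 * π * k y : ℝ) * I)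
    (hL : Tendsto h (comap re atBot ⊓ 𝓟 (im ⁻¹' [[-π, π]])) (𝓝 L))
    (hL' : Tendsto h (comap re atTop ⊓ 𝓟 (im ⁻¹' [[-π, π]])) (𝓝 L')) :
    ((∫ y, k y * (exp y / (exp y + exp x)) : ℝ) : ℂ) = h x - L' := by
  obtain ⟨-, hint⟩ := integrable_and_integral_eq_of_horizontal_sub
    (fun y ↦ by have := hk y; positivity) (differentiableOn_logCauchyQuotient x hh)
    (fun y ↦ logCauchyQuotient_sub x (hjump y)) (tendsto_logCauchyQuotient_atBot x hL)
    (tendsto_logCauchyQuotient_atTop x hL')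
  rw [integral_const_mul] at hint
  push_cast at hint
  have hπ : (2 * π : ℂ) ≠ 0 := by exact_mod_cast two_pi_pos.ne'
  refine mul_left_cancel₀ hπ ?_
  linear_combination hint

end StieltjesInversion

section RelaxationSpectrum

open Complex (I re im)

/-- The spectral density of Mittag-Leffler relaxation, as a density in the logarithm `y` of the
rate: the Mittag-Leffler law of order `α < 1` is the mixture of the exponential laws of rate `e^y`
with these weights. -/
noncomputable def relaxationSpectrum (α y : ℝ) : ℝ :=
  sin (π * α) / (2 * π * (cosh (α * y) + cos (π * α)))

/-- The holomorphic continuation of `x ↦ 1 / (1 + e^(αx))`, that is of the Laplace transform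
`1 / (1 + s ^ α)` in the logarithmic variable `s = e^x`. -/
noncomputable def logisticTransform (α : ℝ) (w : ℂ) : ℂ :=
  (Complex.exp (α * w) + 1)⁻¹

variable {α : ℝ}

theorem logisticTransform_ofReal (α x : ℝ) :
    logisticTransform α x = ((1 + exp x ^ α)⁻¹ : ℝ) := by
  rw [logisticTransform, ← exp_mul, mul_comm x, add_comm]
  push_cast
  rfl

theorem cosh_add_cos_pos (hα : α ∈ Ioo 0 1) (y : ℝ) : 0 < cosh (α * y) + cos (π * α) := by
  have hcos : -1 < cos (π * α) := by
    rw [← cos_pi]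
    exact cos_lt_cos_of_nonneg_of_le_pi (by have := hα.1; positivity) le_rfl
      (by nlinarith [hα.2, pi_pos])
  linarith [one_le_cosh (α * y)]

theorem relaxationSpectrum_nonneg (hα : α ∈ Ioo 0 1) (y : ℝ) : 0 ≤ relaxationSpectrum α y := by
  have hsin : 0 ≤ sin (π * α) :=
    sin_nonneg_of_nonneg_of_le_pi (by have := hα.1; positivity) (by nlinarith [hα.2, pi_pos])
  have := cosh_add_cos_pos hα y
  unfold relaxationSpectrum
  positivity

theorem cexp_mul_add_one_ne_zero (hα : α ∈ Ioo 0 1) {w : ℂ} (hw : w.im ∈ [[-π, π]]) :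
    Complex.exp (α * w) + 1 ≠ 0 := by
  rw [uIcc_of_le (by linarith [pi_pos])] at hw
  intro h
  have him : (α * w).im = α * w.im := by simp
  have hlog : α * w = π * I := by
    rw [← Complex.log_exp (x := α * w) (by rw [him]; nlinarith [hα.1, hα.2, hw.1, pi_pos])
      (by rw [him]; nlinarith [hα.1, hα.2, hw.2, pi_pos]), eq_neg_of_add_eq_zero_left h,
      Complex.log_neg_one]
  have : α * w.im = π := by rw [← him, hlog]; simp
  nlinarith [hα.1, hα.2, hw.2, pi_pos]

theorem differentiableOn_logisticTransform (hα : α ∈ Ioo 0 1) :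
    DifferentiableOn ℂ (logisticTransform α) (im ⁻¹' [[-π, π]]) :=
  DifferentiableOn.inv (by fun_prop) fun _ hw ↦ cexp_mul_add_one_ne_zero hα hw

theorem tendsto_const_mul_comap_re {l l' : Filter ℝ} (h : Tendsto (fun x ↦ α * x) l l') :
    Tendsto (fun w : ℂ ↦ α * w) (comap re l) (comap re l') := by
  rw [tendsto_comap_iff]
  simpa [Function.comp_def] using h.comp tendsto_comap

theorem tendsto_logisticTransform_atBot (hα : 0 < α) :
    Tendsto (logisticTransform α) (comap re atBot) (𝓝 1) := by
  have hexp := Complex.tendsto_exp_comap_re_atBot.comp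
    (tendsto_const_mul_comap_re (tendsto_id.const_mul_atBot hα))
  rw [← inv_one, ← zero_add (1 : ℂ)]
  exact (hexp.add_const 1).inv₀ (by simp)

theorem tendsto_logisticTransform_atTop (hα : 0 < α) :
    Tendsto (logisticTransform α) (comap re atTop) (𝓝 0) :=
  tendsto_inv₀_cobounded.comp <| (tendsto_add_const_cobounded 1).comp <|
    Complex.tendsto_exp_comap_re_atTop.comp
      (tendsto_const_mul_comap_re (tendsto_id.const_mul_atTop hα))

theorem inv_cexp_sub_add_one_sub_inv_cexp_add_add_one {a b : ℂ} (hsub : Complex.exp (a - b) + 1 ≠ 0)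
    (hadd : Complex.exp (a + b) + 1 ≠ 0) :
    (Complex.exp (a - b) + 1)⁻¹ - (Complex.exp (a + b) + 1)⁻¹ =
      Complex.sinh b / (Complex.cosh a + Complex.cosh b) := by
  have hcosh : 2 * Complex.exp a * (Complex.cosh a + Complex.cosh b) =
      (Complex.exp (a - b) + 1) * (Complex.exp (a + b) + 1) := by
    simp only [Complex.cosh, Complex.exp_add, Complex.exp_sub, Complex.exp_neg]
    field_simp
    ring
  have hsinh : 2 * Complex.exp a * Complex.sinh b = Complex.exp (a + b) - Complex.exp (a - b) := by
    simp only [Complex.sinh, Complex.exp_add, Complex.exp_sub, Complex.exp_neg]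
    field_simp
  have hexp : 2 * Complex.exp a ≠ 0 := mul_ne_zero two_ne_zero (Complex.exp_ne_zero a)
  rw [inv_sub_inv hsub hadd, add_sub_add_right_eq_sub, ← hcosh, ← hsinh, mul_div_mul_left _ _ hexp]

theorem logisticTransform_sub (hα : α ∈ Ioo 0 1) (y : ℝ) :
    logisticTransform α (y + ((-π : ℝ) : ℂ) * I) - logisticTransform α (y + π * I) =
      (2 * π * relaxationSpectrum α y : ℝ) * I := by
  have hlower : (α * (y + ((-π : ℝ) : ℂ) * I) : ℂ) = α * y - π * α * I := by push_cast; ring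
  have hupper : (α * (y + π * I) : ℂ) = α * y + π * α * I := by ring
  have hlower_ne := cexp_mul_add_one_ne_zero hα (w := y + ((-π : ℝ) : ℂ) * I) (by simp)
  have hupper_ne := cexp_mul_add_one_ne_zero hα (w := y + π * I) (by simp)
  rw [hlower] at hlower_ne
  rw [hupper] at hupper_ne
  have hdenom := (cosh_add_cos_pos hα y).ne'
  have hspectrum : 2 * π * relaxationSpectrum α y =
      sin (π * α) / (cosh (α * y) + cos (π * α)) := by
    rw [relaxationSpectrum]
    field_simp
  rw [logisticTransform, logisticTransform, hlower, hupper,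
    inv_cexp_sub_add_one_sub_inv_cexp_add_add_one hlower_ne hupper_ne, Complex.sinh_mul_I,
    Complex.cosh_mul_I, hspectrum]
  push_cast
  ring

theorem integrable_relaxationSpectrum_and_integral_eq_one (hα : α ∈ Ioo 0 1) :
    Integrable (relaxationSpectrum α) ∧ ∫ y, relaxationSpectrum α y = 1 := by
  obtain ⟨hint, hval⟩ := integrable_and_integral_eq_of_horizontal_sub
    (fun y ↦ by have := relaxationSpectrum_nonneg hα y; positivity)
    (differentiableOn_logisticTransform hα) (logisticTransform_sub hα)
    ((tendsto_logisticTransform_atBot hα.1).mono_left inf_le_left)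
    ((tendsto_logisticTransform_atTop hα.1).mono_left inf_le_left)
  have hint' : Integrable (relaxationSpectrum α) :=
    (integrable_const_mul_iff (isUnit_iff_ne_zero.2 two_pi_pos.ne') _).1 hint
  have hval' : 2 * π * ∫ y, relaxationSpectrum α y = (π - -π) * (1 - 0) := by
    rw [← integral_const_mul]
    exact_mod_cast hval
  exact ⟨hint', by nlinarith [pi_pos]⟩

theorem integral_relaxationSpectrum_mul_exp_div (hα : α ∈ Ioo 0 1) {s : ℝ} (hs : 0 < s) :
    ∫ y, relaxationSpectrum α y * (exp y / (exp y + s)) = (1 + s ^ α)⁻¹ := by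
  have hint := integral_mul_exp_div_eq (log s) (relaxationSpectrum_nonneg hα)
    (differentiableOn_logisticTransform hα) (logisticTransform_sub hα)
    ((tendsto_logisticTransform_atBot hα.1).mono_left inf_le_left)
    ((tendsto_logisticTransform_atTop hα.1).mono_left inf_le_left)
  rw [logisticTransform_ofReal, exp_log hs, sub_zero] at hint
  exact_mod_cast hint

end RelaxationSpectrum

section ExponentialMixture

/-- The mixture, with weights `k`, of the densities `t ↦ e^y * e^(-e^y t)` of the exponential laws
of rate `e^y`. -/
noncomputable def expMixture (k : ℝ → ℝ) (t : ℝ) : ℝ :=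
  ∫ y, k y * (exp y * exp (-(exp y * t)))

variable {k : ℝ → ℝ} {s : ℝ}

theorem expMixture_nonneg (hk : ∀ y, 0 ≤ k y) (t : ℝ) : 0 ≤ expMixture k t :=
  integral_nonneg fun y ↦ by have := hk y; positivity

theorem exp_neg_mul_mul_exponential_density (k : ℝ → ℝ) (s y t : ℝ) :
    exp (-(s * t)) * (k y * (exp y * exp (-(exp y * t)))) =
      k y * exp y * exp (-(exp y + s) * t) := by
  rw [neg_mul, add_mul, neg_add, exp_add]
  ring

theorem integral_exp_neg_mul_Ioi_zero {r : ℝ} (hr : 0 < r) :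
    ∫ t in Ioi 0, exp (-r * t) = r⁻¹ := by
  rw [integral_exp_mul_Ioi (neg_lt_zero.2 hr), mul_zero, exp_zero, neg_div_neg_eq, one_div]

theorem integrable_exp_neg_mul_mul_exponential_density (hk : Integrable k) (hs : 0 ≤ s) :
    Integrable (fun p : ℝ × ℝ ↦ exp (-(s * p.2)) * (k p.1 * (exp p.1 * exp (-(exp p.1 * p.2)))))
      (volume.prod (volume.restrict (Ioi 0))) := by
  simp only [exp_neg_mul_mul_exponential_density]
  have hrate (y : ℝ) : 0 < exp y + s := by positivity
  have hmeas : AEStronglyMeasurable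
      (fun p : ℝ × ℝ ↦ k p.1 * exp p.1 * exp (-(exp p.1 + s) * p.2))
      (volume.prod (volume.restrict (Ioi 0))) :=
    (hk.aestronglyMeasurable.comp_fst.mul (by fun_prop)).mul (by fun_prop)
  have hweight (y : ℝ) : ‖exp y / (exp y + s)‖ ≤ 1 := by
    rw [norm_of_nonneg (by positivity)]
    exact div_le_one_of_le₀ (by linarith) (hrate y).le
  refine (integrable_prod_iff hmeas).2 ⟨ae_of_all _ fun y ↦
    (exp_neg_integrableOn_Ioi 0 (hrate y)).const_mul (k y * exp y), ?_⟩
  simp only [norm_mul, norm_eq_abs, abs_exp, integral_const_mul,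
    integral_exp_neg_mul_Ioi_zero (hrate _), mul_assoc, ← div_eq_mul_inv]
  exact hk.norm.mul_bdd (c := 1)
    (continuous_exp.div (by fun_prop) fun y ↦ (hrate y).ne').aestronglyMeasurable
    (ae_of_all _ hweight)

theorem integrableOn_exp_neg_mul_mul_expMixture (hk : Integrable k) (hs : 0 ≤ s) :
    IntegrableOn (fun t ↦ exp (-(s * t)) * expMixture k t) (Ioi 0) := by
  simp only [expMixture, ← integral_const_mul]
  exact (integrable_exp_neg_mul_mul_exponential_density hk hs).integral_prod_right

theorem integral_exp_neg_mul_mul_expMixture (hk : Integrable k) (hs : 0 ≤ s) :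
    ∫ t in Ioi 0, exp (-(s * t)) * expMixture k t = ∫ y, k y * (exp y / (exp y + s)) := by
  simp only [expMixture, ← integral_const_mul]
  rw [← integral_integral_swap (integrable_exp_neg_mul_mul_exponential_density hk hs)]
  refine integral_congr_ae (ae_of_all _ fun y ↦ ?_)
  simp only [exp_neg_mul_mul_exponential_density, integral_const_mul]
  rw [integral_exp_neg_mul_Ioi_zero (by positivity), mul_assoc, div_eq_mul_inv]

end ExponentialMixture

section MittagLefflerLaw

/-- The density `t ↦ t^(α-1) * E_{α,α}(-t^α)` on `(0, ∞)` of the law `ML(α, 1)`. -/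
noncomputable def mittagLefflerDensity (α t : ℝ) : ℝ :=
  t ^ (α - 1) * mittagLeffler α α (-t ^ α)

/-- The Mittag-Leffler law `ML(α, 1)`; the scale parameter `θ` of `ML(α, θ)` only rescales it. -/
noncomputable def mittagLefflerLaw (α : ℝ) : Measure ℝ :=
  (volume.restrict (Ioi 0)).withDensity fun t ↦ ENNReal.ofReal (mittagLefflerDensity α t)

variable {α s : ℝ}

theorem mittagLefflerDensity_one (t : ℝ) : mittagLefflerDensity 1 t = exp (-t) := by
  rw [mittagLefflerDensity, mittagLeffler_one_one, sub_self, rpow_zero, rpow_one, one_mul]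

theorem mittagLefflerDensity_ae_eq_expMixture (hα : α ∈ Ioo 0 1) :
    mittagLefflerDensity α =ᵐ[volume.restrict (Ioi 0)] expMixture (relaxationSpectrum α) := by
  have hk := (integrable_relaxationSpectrum_and_integral_eq_one hα).1
  have hseries {s : ℝ} (hs : 1 < s) : |(-1 : ℝ)| < s ^ α := by
    simpa using one_lt_rpow hs hα.1
  refine ae_eq_of_integral_exp_neg_mul_eq (a := 1) (fun s hs ↦ ?_) (fun s hs ↦ ?_) fun s hs ↦ ?_
  all_goals have hs₀ : 0 < s := one_pos.trans hs
  · simpa only [IntegrableOn, mittagLefflerDensity, neg_one_mul] using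
      integrableOn_exp_neg_mul_mul_mittagLeffler hα.1 hα.1 hs₀ (hseries hs)
  · exact integrableOn_exp_neg_mul_mul_expMixture hk hs₀.le
  · have hint := integral_exp_neg_mul_mul_mittagLeffler hα.1 hα.1 hs₀ (hseries hs)
    rw [integral_exp_neg_mul_mul_expMixture hk hs₀.le,
      integral_relaxationSpectrum_mul_exp_div hα hs₀]
    simpa [mittagLefflerDensity, add_comm] using hint

theorem mittagLefflerDensity_ae_nonneg (hα : α ∈ Ioc 0 1) :
    ∀ᵐ t ∂volume.restrict (Ioi 0), 0 ≤ mittagLefflerDensity α t := by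
  rcases eq_or_lt_of_le hα.2 with rfl | hα₁
  · exact ae_of_all _ fun t ↦ (mittagLefflerDensity_one t).symm ▸ (exp_pos _).le
  · filter_upwards [mittagLefflerDensity_ae_eq_expMixture ⟨hα.1, hα₁⟩] with t ht
    exact ht ▸ expMixture_nonneg (relaxationSpectrum_nonneg ⟨hα.1, hα₁⟩) t

theorem integral_exp_neg_mul_mul_mittagLefflerDensity (hα : α ∈ Ioc 0 1) (hs : 0 < s) :
    ∫ t in Ioi 0, exp (-(s * t)) * mittagLefflerDensity α t = (1 + s ^ α)⁻¹ := by
  rcases eq_or_lt_of_le hα.2 with rfl | hα₁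
  · have hdensity (t : ℝ) : exp (-(s * t)) * mittagLefflerDensity 1 t = exp (-(1 + s) * t) := by
      rw [mittagLefflerDensity_one, ← exp_add]
      ring_nf
    simp only [hdensity]
    rw [integral_exp_neg_mul_Ioi_zero (by positivity), rpow_one]
  · rw [← integral_relaxationSpectrum_mul_exp_div ⟨hα.1, hα₁⟩ hs,
      ← integral_exp_neg_mul_mul_expMixture
        (integrable_relaxationSpectrum_and_integral_eq_one ⟨hα.1, hα₁⟩).1 hs.le]
    refine integral_congr_ae ?_
    filter_upwards [mittagLefflerDensity_ae_eq_expMixture ⟨hα.1, hα₁⟩] with t ht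
    rw [ht]

theorem integral_mittagLefflerDensity (hα : α ∈ Ioc 0 1) :
    ∫ t in Ioi 0, mittagLefflerDensity α t = 1 := by
  rcases eq_or_lt_of_le hα.2 with rfl | hα₁
  · simpa [mittagLefflerDensity_one] using integral_exp_neg_mul_Ioi_zero one_pos
  · obtain ⟨hk, hmass⟩ := integrable_relaxationSpectrum_and_integral_eq_one ⟨hα.1, hα₁⟩
    rw [integral_congr_ae (mittagLefflerDensity_ae_eq_expMixture ⟨hα.1, hα₁⟩), ← hmass]
    simpa [(exp_pos _).ne'] using integral_exp_neg_mul_mul_expMixture hk le_rfl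

theorem integrableOn_mittagLefflerDensity (hα : α ∈ Ioc 0 1) :
    IntegrableOn (mittagLefflerDensity α) (Ioi 0) :=
  Integrable.of_integral_ne_zero ((integral_mittagLefflerDensity hα).trans_ne one_ne_zero)

theorem toReal_ofReal_mittagLefflerDensity_smul_ae_eq (hα : α ∈ Ioc 0 1) (φ : ℝ → ℝ) :
    (fun t ↦ (ENNReal.ofReal (mittagLefflerDensity α t)).toReal • φ t)
      =ᵐ[volume.restrict (Ioi 0)] fun t ↦ φ t * mittagLefflerDensity α t := by
  filter_upwards [mittagLefflerDensity_ae_nonneg hα] with t ht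
  rw [ENNReal.toReal_ofReal ht, smul_eq_mul, mul_comm]

theorem integrable_mittagLefflerLaw_iff (hα : α ∈ Ioc 0 1) {φ : ℝ → ℝ} :
    Integrable φ (mittagLefflerLaw α) ↔
      IntegrableOn (fun t ↦ φ t * mittagLefflerDensity α t) (Ioi 0) := by
  rw [mittagLefflerLaw, integrable_withDensity_iff_integrable_smul₀'
    (integrableOn_mittagLefflerDensity hα).aemeasurable.ennreal_ofReal
    (ae_of_all _ fun _ ↦ ENNReal.ofReal_lt_top), IntegrableOn,
    integrable_congr (toReal_ofReal_mittagLefflerDensity_smul_ae_eq hα φ)]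

theorem integral_mittagLefflerLaw (hα : α ∈ Ioc 0 1) (φ : ℝ → ℝ) :
    ∫ t, φ t ∂mittagLefflerLaw α = ∫ t in Ioi 0, φ t * mittagLefflerDensity α t := by
  rw [mittagLefflerLaw, integral_withDensity_eq_integral_toReal_smul₀
    (integrableOn_mittagLefflerDensity hα).aemeasurable.ennreal_ofReal
    (ae_of_all _ fun _ ↦ ENNReal.ofReal_lt_top),
    integral_congr_ae (toReal_ofReal_mittagLefflerDensity_smul_ae_eq hα φ)]

theorem isProbabilityMeasure_mittagLefflerLaw (hα : α ∈ Ioc 0 1) :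
    IsProbabilityMeasure (mittagLefflerLaw α) := by
  constructor
  rw [mittagLefflerLaw, withDensity_apply _ MeasurableSet.univ, Measure.restrict_univ,
    ← ofReal_integral_eq_lintegral_ofReal (integrableOn_mittagLefflerDensity hα)
      (mittagLefflerDensity_ae_nonneg hα), integral_mittagLefflerDensity hα, ENNReal.ofReal_one]

theorem ae_pos_mittagLefflerLaw (α : ℝ) : ∀ᵐ t ∂mittagLefflerLaw α, 0 < t :=
  (withDensity_absolutelyContinuous _ _).ae_le (ae_restrict_mem measurableSet_Ioi)

theorem mgf_id_mittagLefflerLaw (hα : α ∈ Ioc 0 1) (hs : 0 < s) :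
    mgf id (mittagLefflerLaw α) (-s) = (1 + s ^ α)⁻¹ := by
  simp only [mgf, id, integral_mittagLefflerLaw hα, neg_mul,
    integral_exp_neg_mul_mul_mittagLefflerDensity hα hs]

end MittagLefflerLaw

section LogisticSecondMoment

variable {α : ℝ}

theorem hasSum_neg_one_pow_mul_one_div_sq :
    HasSum (fun n : ℕ ↦ (-1 : ℝ) ^ n * (1 / (n : ℝ) ^ 2)) (-(π ^ 2 / 12)) := by
  let f (n : ℕ) : ℝ := 1 / (n : ℝ) ^ 2
  have heven : HasSum (fun n ↦ f (2 * n)) (1 / 4 * (π ^ 2 / 6)) := by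
    refine (hasSum_zeta_two.mul_left (1 / 4)).congr_fun fun n ↦ ?_
    simp only [f]
    push_cast
    ring
  have hodd : Summable fun n ↦ f (2 * n + 1) :=
    hasSum_zeta_two.summable.comp_injective (i := fun n ↦ 2 * n + 1) fun m n h ↦ by grind
  have htotal := (heven.even_add_odd hodd.hasSum).unique hasSum_zeta_two
  have hsum : -(π ^ 2 / 12) = 1 / 4 * (π ^ 2 / 6) + -∑' n, f (2 * n + 1) := by linarith
  rw [hsum]
  refine HasSum.even_add_odd (heven.congr_fun fun n ↦ ?_) (hodd.hasSum.neg.congr_fun fun n ↦ ?_)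
  · simp [f]
  · simp [f, pow_succ]

theorem integral_mul_sq_mul_exp_neg_nat_mul (hα : 0 < α) (n : ℕ) :
    ∫ t in Ioi 0, n * (t ^ 2 * exp (-(n * α * t))) = 2 / α ^ 3 * (1 / (n : ℝ) ^ 2) := by
  rcases n.eq_zero_or_pos with rfl | hn
  · simp
  have hmoment : ∫ t in Ioi 0, t ^ 2 * exp (-(n * α * t)) = (1 / (n * α)) ^ 3 * 2 := by
    have hGamma := integral_rpow_mul_exp_neg_mul_Ioi three_pos (mul_pos (Nat.cast_pos.2 hn) hα)
    have htwo : (3 - 1 : ℝ) = 2 := by norm_num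
    simpa only [htwo, rpow_ofNat, Gamma_ofNat_eq_factorial, Nat.add_one_sub_one, Nat.factorial_two,
      Nat.cast_ofNat] using hGamma
  rw [integral_const_mul, hmoment]
  field_simp

theorem hasSum_mul_exp_neg_nat_mul {x : ℝ} (hx : 0 < x) :
    HasSum (fun n : ℕ ↦ (-1) ^ (n + 1) * (n * exp (-(n * x)))) (exp (-x) / (1 + exp (-x)) ^ 2) := by
  have hlt : ‖-exp (-x)‖ < 1 := by simpa using hx
  have hgeometric := (hasSum_coe_mul_geometric_of_norm_lt_one hlt).neg
  rw [neg_div, neg_neg, sub_neg_eq_add] at hgeometric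
  refine hgeometric.congr_fun fun n ↦ ?_
  rw [neg_pow (exp (-x)), ← exp_nat_mul, mul_neg]
  ring

theorem integral_sq_mul_exp_div_one_add_exp_sq (hα : 0 < α) :
    ∫ t in Ioi 0, t ^ 2 * (exp (-(α * t)) / (1 + exp (-(α * t))) ^ 2) = π ^ 2 / (6 * α ^ 3) := by
  let F (n : ℕ) (t : ℝ) : ℝ := (-1) ^ (n + 1) * (n * (t ^ 2 * exp (-(n * α * t))))
  have hF_integrable (n : ℕ) : Integrable (F n) (volume.restrict (Ioi 0)) := by
    rcases n.eq_zero_or_pos with rfl | hn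
    · simp [F]
    · refine (Integrable.of_integral_ne_zero ?_).const_mul _
      rw [integral_mul_sq_mul_exp_neg_nat_mul hα]
      positivity
  have hF_norm (n : ℕ) : ∫ t in Ioi 0, ‖F n t‖ = 2 / α ^ 3 * (1 / (n : ℝ) ^ 2) := by
    rw [← integral_mul_sq_mul_exp_neg_nat_mul hα]
    refine integral_congr_ae (ae_of_all _ fun t ↦ ?_)
    simp [F]
  have hF_tsum : EqOn (fun t ↦ t ^ 2 * (exp (-(α * t)) / (1 + exp (-(α * t))) ^ 2))
      (fun t ↦ ∑' n, F n t) (Ioi 0) := fun t (ht : 0 < t) ↦ by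
    refine (((hasSum_mul_exp_neg_nat_mul (mul_pos hα ht)).mul_left (t ^ 2)).congr_fun
      fun n ↦ ?_).tsum_eq.symm
    simp only [F, mul_assoc]
    ring
  have hterm := hasSum_integral_of_summable_integral_norm hF_integrable
    (by simpa only [hF_norm] using hasSum_zeta_two.summable.mul_left _)
  simp only [F, integral_const_mul (_ ^ _), integral_mul_sq_mul_exp_neg_nat_mul hα] at hterm
  have hzeta : HasSum (fun n : ℕ ↦ (-1) ^ (n + 1) * (2 / α ^ 3 * (1 / (n : ℝ) ^ 2)))
      (-(2 / α ^ 3) * -(π ^ 2 / 12)) :=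
    (hasSum_neg_one_pow_mul_one_div_sq.mul_left _).congr_fun fun n ↦ by ring
  rw [setIntegral_congr_fun measurableSet_Ioi hF_tsum, hterm.unique hzeta]
  ring

theorem integral_exp_smul_comp_exp {E : Type*} [NormedAddCommGroup E] [NormedSpace ℝ E]
    (g : ℝ → E) : ∫ x, exp x • g (exp x) = ∫ t in Ioi 0, g t := by
  have hsubst := integral_image_eq_integral_abs_deriv_smul MeasurableSet.univ
    (fun x _ ↦ (hasDerivAt_exp x).hasDerivWithinAt) exp_injective.injOn g
  simpa only [image_univ, range_exp, Measure.restrict_univ, abs_exp] using hsubst.symm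

theorem exp_div_one_add_exp_sq_neg (x : ℝ) :
    exp (-x) / (1 + exp (-x)) ^ 2 = exp x / (1 + exp x) ^ 2 := by
  rw [exp_neg]
  field_simp
  ring

theorem integral_log_sq_mul_rpow_div_one_add_rpow_sq (hα : 0 < α) :
    ∫ s in Ioi 0, log s ^ 2 * (α * s ^ (α - 1) / (1 + s ^ α) ^ 2) = π ^ 2 / (3 * α ^ 2) := by
  have heven (x : ℝ) :
      exp x • (log (exp x) ^ 2 * (α * exp x ^ (α - 1) / (1 + exp x ^ α) ^ 2)) =
        α * (|x| ^ 2 * (exp (-(α * |x|)) / (1 + exp (-(α * |x|))) ^ 2)) := by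
    have hsign : exp (-(α * |x|)) / (1 + exp (-(α * |x|))) ^ 2 =
        exp (α * x) / (1 + exp (α * x)) ^ 2 := by
      rcases abs_choice x with h | h <;> simp only [h, mul_neg, exp_div_one_add_exp_sq_neg]
    rw [hsign, sq_abs, log_exp, rpow_sub_one (exp_pos x).ne', ← exp_mul, mul_comm x α, smul_eq_mul]
    field_simp
  rw [← integral_exp_smul_comp_exp]
  simp only [heven]
  rw [integral_const_mul,
    integral_comp_abs (f := fun x ↦ x ^ 2 * (exp (-(α * x)) / (1 + exp (-(α * x))) ^ 2)),
    integral_sq_mul_exp_div_one_add_exp_sq hα]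
  field_simp
  norm_num

end LogisticSecondMoment

section LogExponential

variable {t : ℝ}

theorem log_sq_le_rpow_add_rpow (ht : 0 < t) :
    log t ^ 2 ≤ 8 * (t ^ (1 / 2 : ℝ) + t ^ (-(1 / 2) : ℝ)) := by
  calc log t ^ 2 = 8 * (|log t * (1 / 2)| ^ 2 / 2) := by rw [sq_abs]; ring
    _ ≤ 8 * exp |log t * (1 / 2)| := by
      have := quadratic_le_exp_of_nonneg (abs_nonneg (log t * (1 / 2)))
      linarith [abs_nonneg (log t * (1 / 2))]
    _ ≤ 8 * (exp (log t * (1 / 2)) + exp (-(log t * (1 / 2)))) := by gcongr; exact exp_abs_le _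
    _ = 8 * (t ^ (1 / 2 : ℝ) + t ^ (-(1 / 2) : ℝ)) := by
      rw [rpow_def_of_pos ht, rpow_def_of_pos ht, mul_neg]

theorem integrableOn_log_sq_mul_exp_neg :
    IntegrableOn (fun t ↦ log t ^ 2 * exp (-t)) (Ioi 0) := by
  have hbound : IntegrableOn
      (fun t ↦ 8 * (exp (-t) * t ^ (3 / 2 - 1 : ℝ) + exp (-t) * t ^ (1 / 2 - 1 : ℝ))) (Ioi 0) :=
    ((GammaIntegral_convergent (by norm_num)).add
      (GammaIntegral_convergent (by norm_num))).const_mul 8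
  refine hbound.mono' (by fun_prop) ?_
  filter_upwards [ae_restrict_mem measurableSet_Ioi] with t (ht : 0 < t)
  rw [norm_of_nonneg (by positivity)]
  have := mul_le_mul_of_nonneg_right (log_sq_le_rpow_add_rpow ht) (exp_pos (-t)).le
  norm_num at this ⊢
  linarith

theorem integral_log_mul_exp_neg :
    ∫ t in Ioi 0, log t * exp (-t) = -eulerMascheroniConstant := by
  have hGamma : Complex.GammaIntegral =ᶠ[𝓝 1] Complex.Gamma := by
    filter_upwards [(isOpen_lt continuous_const Complex.continuous_re).mem_nhds
      (show (0 : ℝ) < Complex.re 1 by simp)] with z hz using (Complex.Gamma_eq_integral hz).symm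
  have hderiv := (Complex.hasDerivAt_GammaIntegral (s := 1) (by simp)).unique
    (Complex.hasDerivAt_Gamma_one.congr_of_eventuallyEq hGamma)
  simp only [sub_self, Complex.cpow_zero, one_mul] at hderiv
  exact_mod_cast hderiv

theorem integrableOn_log_mul_exp_neg : IntegrableOn (fun t ↦ log t * exp (-t)) (Ioi 0) := by
  refine Integrable.of_integral_ne_zero ?_
  rw [integral_log_mul_exp_neg]
  linarith [one_half_lt_eulerMascheroniConstant]

theorem integrableOn_log_add_sq_mul_exp_neg (c : ℝ) :
    IntegrableOn (fun t ↦ (log t + c) ^ 2 * exp (-t)) (Ioi 0) := by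
  refine ((integrableOn_log_sq_mul_exp_neg.add (integrableOn_log_mul_exp_neg.const_mul (2 * c))).add
    ((integrableOn_exp_neg_Ioi 0).const_mul (c ^ 2))).congr (ae_of_all _ fun t ↦ ?_)
  simp only [Pi.add_apply]
  ring

theorem integral_log_sub_sq_mul_exp_neg (c : ℝ) :
    ∫ t in Ioi 0, (log t - c) ^ 2 * exp (-t) =
      (∫ t in Ioi 0, (log t + eulerMascheroniConstant) ^ 2 * exp (-t)) +
        (c + eulerMascheroniConstant) ^ 2 := by
  set γ := eulerMascheroniConstant
  have hexpand (t : ℝ) : (log t - c) ^ 2 * exp (-t) = (log t + γ) ^ 2 * exp (-t) +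
      (-2 * (c + γ) * (log t * exp (-t)) + (c ^ 2 - γ ^ 2) * exp (-t)) := by ring
  simp only [hexpand]
  have hlog := integrableOn_log_mul_exp_neg.const_mul (-2 * (c + γ))
  have hexp := (integrableOn_exp_neg_Ioi 0).const_mul (c ^ 2 - γ ^ 2)
  rw [integral_add (integrableOn_log_add_sq_mul_exp_neg γ) (hlog.fun_add hexp),
    integral_add hlog hexp, integral_const_mul, integral_const_mul, integral_log_mul_exp_neg,
    integral_exp_neg_Ioi_zero]
  ring

theorem integral_log_sq_mul_mul_exp_neg_mul (ht : 0 < t) :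
    ∫ s in Ioi 0, log s ^ 2 * (t * exp (-(s * t))) =
      (∫ u in Ioi 0, (log u + eulerMascheroniConstant) ^ 2 * exp (-u)) +
        (log t + eulerMascheroniConstant) ^ 2 := by
  have hscale : EqOn (fun s ↦ log s ^ 2 * (t * exp (-(s * t))))
      (fun s ↦ t * ((log (t * s) - log t) ^ 2 * exp (-(t * s)))) (Ioi 0) := fun s (hs : 0 < s) ↦ by
    simp only [log_mul ht.ne' hs.ne', add_sub_cancel_left, mul_comm s t]
    ring
  rw [setIntegral_congr_fun measurableSet_Ioi hscale, integral_const_mul,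
    integral_comp_mul_left_Ioi (fun u ↦ (log u - log t) ^ 2 * exp (-u)) 0 ht, mul_zero,
    integral_log_sub_sq_mul_exp_neg, smul_eq_mul, mul_inv_cancel_left₀ ht.ne']

end LogExponential

section LogMoment

variable {μ : Measure ℝ} {α : ℝ}

theorem mem_integrableExpSet_of_mgf_neg_eq (hμ : ∀ s > 0, mgf id μ (-s) = (1 + s ^ α)⁻¹) {u : ℝ}
    (hu : u < 0) : u ∈ integrableExpSet id μ := by
  refine Integrable.of_integral_ne_zero ?_
  have hmgf := hμ (-u) (neg_pos.2 hu)
  rw [neg_neg] at hmgf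
  rw [← mgf, hmgf]
  have := rpow_pos_of_pos (neg_pos.2 hu) α
  positivity

theorem integral_mul_exp_neg_mul (hμ : ∀ s > 0, mgf id μ (-s) = (1 + s ^ α)⁻¹) {s : ℝ}
    (hs : 0 < s) : ∫ t, t * exp (-(s * t)) ∂μ = α * s ^ (α - 1) / (1 + s ^ α) ^ 2 := by
  have hinterior : -s ∈ interior (integrableExpSet id μ) :=
    interior_maximal (fun u hu ↦ mem_integrableExpSet_of_mgf_neg_eq hμ hu) isOpen_Iio
      (neg_lt_zero.2 hs)
  have hmgf := (hasDerivAt_mgf hinterior).comp s (hasDerivAt_neg s)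
  have hexplicit : HasDerivAt (mgf id μ ∘ Neg.neg) (-(α * s ^ (α - 1)) / (1 + s ^ α) ^ 2) s := by
    refine (((hasDerivAt_rpow_const (Or.inl hs.ne')).const_add 1).inv ?_).congr_of_eventuallyEq ?_
    · have := rpow_pos_of_pos hs α
      positivity
    · filter_upwards [eventually_gt_nhds hs] with u hu using hμ u hu
  have hderiv := hmgf.unique hexplicit
  simp only [id, neg_mul] at hderiv
  linear_combination -hderiv

variable [IsProbabilityMeasure μ]

theorem integrable_log_sq_mul_mul_exp_neg_mul (hα : 0 < α) (hpos : ∀ᵐ t ∂μ, 0 < t)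
    (hμ : ∀ s > 0, mgf id μ (-s) = (1 + s ^ α)⁻¹) :
    Integrable (fun p : ℝ × ℝ ↦ log p.2 ^ 2 * (p.1 * exp (-(p.2 * p.1))))
      (μ.prod (volume.restrict (Ioi 0))) := by
  have hmoment {s : ℝ} (hs : 0 < s) : ∫ t, ‖log s ^ 2 * (t * exp (-(s * t)))‖ ∂μ =
      log s ^ 2 * (α * s ^ (α - 1) / (1 + s ^ α) ^ 2) := by
    rw [← integral_mul_exp_neg_mul hμ hs, ← integral_const_mul]
    refine integral_congr_ae ?_
    filter_upwards [hpos] with t ht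
    exact norm_of_nonneg (by positivity)
  refine (integrable_prod_iff' (by fun_prop)).2 ⟨?_, ?_⟩
  · filter_upwards [ae_restrict_mem measurableSet_Ioi] with s (hs : 0 < s)
    refine (Integrable.of_integral_ne_zero ?_).const_mul _
    rw [integral_mul_exp_neg_mul hμ hs]
    positivity
  · refine IntegrableOn.congr_fun (Integrable.of_integral_ne_zero ?_)
      (fun s hs ↦ (hmoment hs).symm) measurableSet_Ioi
    rw [integral_log_sq_mul_rpow_div_one_add_rpow_sq hα]
    positivity

theorem integrable_and_integral_log_add_sq (hα : 0 < α) (hpos : ∀ᵐ t ∂μ, 0 < t)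
    (hμ : ∀ s > 0, mgf id μ (-s) = (1 + s ^ α)⁻¹) :
    Integrable (fun t ↦ (log t + eulerMascheroniConstant) ^ 2) μ ∧
      ∫ t, (log t + eulerMascheroniConstant) ^ 2 ∂μ = π ^ 2 / (3 * α ^ 2) -
        ∫ u in Ioi 0, (log u + eulerMascheroniConstant) ^ 2 * exp (-u) := by
  set V := ∫ u in Ioi 0, (log u + eulerMascheroniConstant) ^ 2 * exp (-u)
  have hprod := integrable_log_sq_mul_mul_exp_neg_mul hα hpos hμ
  have hinner : (fun t ↦ ∫ s in Ioi 0, log s ^ 2 * (t * exp (-(s * t)))) =ᵐ[μ]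
      fun t ↦ V + (log t + eulerMascheroniConstant) ^ 2 := by
    filter_upwards [hpos] with t ht using integral_log_sq_mul_mul_exp_neg_mul ht
  have hint : Integrable (fun t ↦ (log t + eulerMascheroniConstant) ^ 2) μ :=
    ((hprod.integral_prod_left.congr hinner).sub (integrable_const V)).congr
      (ae_of_all _ fun _ ↦ add_sub_cancel_left _ _)
  have houter : ∫ t, (∫ s in Ioi 0, log s ^ 2 * (t * exp (-(s * t)))) ∂μ = π ^ 2 / (3 * α ^ 2) := by
    rw [integral_integral_swap hprod, ← integral_log_sq_mul_rpow_div_one_add_rpow_sq hα]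
    refine setIntegral_congr_fun measurableSet_Ioi fun s hs ↦ ?_
    simp only [integral_const_mul, integral_mul_exp_neg_mul hμ hs]
  rw [integral_congr_ae hinner, integral_add (integrable_const V) hint, integral_const,
    probReal_univ, one_smul] at houter
  exact ⟨hint, by linarith⟩

end LogMoment

section LogVariance

variable {α : ℝ}

theorem integral_log_add_sq_mul_exp_neg :
    ∫ t in Ioi 0, (log t + eulerMascheroniConstant) ^ 2 * exp (-t) = π ^ 2 / 6 := by
  have hone : (1 : ℝ) ∈ Ioc 0 1 := right_mem_Ioc.2 one_pos
  have := isProbabilityMeasure_mittagLefflerLaw hone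
  have hmoment := (integrable_and_integral_log_add_sq one_pos (ae_pos_mittagLefflerLaw 1)
    fun s ↦ mgf_id_mittagLefflerLaw hone).2
  simp only [integral_mittagLefflerLaw hone, mittagLefflerDensity_one] at hmoment
  linarith

theorem integrableOn_and_integral_log_add_sq_mul_mittagLefflerDensity (hα : α ∈ Ioc 0 1) :
    IntegrableOn (fun t ↦ (log t + eulerMascheroniConstant) ^ 2 * mittagLefflerDensity α t)
        (Ioi 0) ∧
      ∫ t in Ioi 0, (log t + eulerMascheroniConstant) ^ 2 * mittagLefflerDensity α t =
        π ^ 2 * (1 / (3 * α ^ 2) - 1 / 6) := by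
  have := isProbabilityMeasure_mittagLefflerLaw hα
  rw [← integrable_mittagLefflerLaw_iff hα, ← integral_mittagLefflerLaw hα]
  convert! integrable_and_integral_log_add_sq hα.1 (ae_pos_mittagLefflerLaw α)
    (fun s ↦ mgf_id_mittagLefflerLaw hα) using 2
  rw [integral_log_add_sq_mul_exp_neg]
  ring

theorem rpow_mul_mittagLefflerDensity_rpow_mul (hα : α ≠ 0) {θ t : ℝ} (hθ : 0 < θ) (ht : 0 < t) :
    θ ^ (1 / α) * mittagLefflerDensity α (θ ^ (1 / α) * t) =
      θ * t ^ (α - 1) * mittagLeffler α α (-θ * t ^ α) := by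
  have hc : 0 < θ ^ (1 / α) := rpow_pos_of_pos hθ _
  have hcα : (θ ^ (1 / α)) ^ α = θ := by rw [← rpow_mul hθ.le, one_div_mul_cancel hα, rpow_one]
  rw [mittagLefflerDensity, mul_rpow hc.le ht.le, mul_rpow hc.le ht.le, rpow_sub_one hc.ne', hcα,
    neg_mul]
  field_simp

end LogVariance

theorem stmt14 (α θ : ℝ) (hα : α ∈ Set.Ioc (0:ℝ) 1) (hθ : 0 < θ) :
    IntegrableOn
      (fun t : ℝ => (Real.log t + Real.log θ / α + Real.eulerMascheroniConstant) ^ 2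
        * (θ * t ^ (α - 1) * mittagLeffler α α (-θ * t ^ α)))
      (Set.Ioi 0) ∧
    (∫ t in Set.Ioi (0:ℝ),
        (Real.log t + Real.log θ / α + Real.eulerMascheroniConstant) ^ 2
          * (θ * t ^ (α - 1) * mittagLeffler α α (-θ * t ^ α)))
      = Real.pi ^ 2 * (1 / (3 * α ^ 2) - 1 / 6) := by
  obtain ⟨hint, hval⟩ := integrableOn_and_integral_log_add_sq_mul_mittagLefflerDensity hα
  set F := fun t ↦ (log t + eulerMascheroniConstant) ^ 2 * mittagLefflerDensity α t
  set c := θ ^ (1 / α) with hc_def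
  have hc : 0 < c := rpow_pos_of_pos hθ _
  have hscale : EqOn (fun t ↦ c * F (c * t)) (fun t ↦
      (log t + log θ / α + eulerMascheroniConstant) ^ 2
        * (θ * t ^ (α - 1) * mittagLeffler α α (-θ * t ^ α))) (Ioi 0) := fun t (ht : 0 < t) ↦ by
    simp only [F, ← rpow_mul_mittagLefflerDensity_rpow_mul hα.1.ne' hθ ht, ← hc_def]
    rw [log_mul hc.ne' ht.ne', hc_def, log_rpow hθ]
    ring
  rw [← integrableOn_congr_fun hscale measurableSet_Ioi,
    ← setIntegral_congr_fun measurableSet_Ioi hscale, integral_const_mul,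
    integral_comp_mul_left_Ioi F 0 hc, mul_zero, hval, smul_eq_mul, mul_inv_cancel_left₀ hc.ne']
  exact ⟨((integrableOn_Ioi_comp_mul_left_iff F 0 hc).2 (by rwa [mul_zero])).const_mul c, rfl⟩
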